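/- Let 𝓛 and 𝓛' be ergodic symmetric generator matrices on the same finite state space Ω with |Ω| ≥ 2 (so both have uniform stationary distribution). Let ω assign a positive weight to each transition of 𝓛, and for each transition (α,β) of 𝓛' fix one 𝓛-path γ_{α,β} from α to β. Then τ(𝓛) ≤ τ(𝓛') · max over all transitions (σ,η) of 𝓛 of the quantity (1/(𝓛[σ→η]·ω(σ,η))) · Σ_{(α,β) transition of 𝓛' such that γ_{α,β} uses (σ,η)} 𝓛'[α→β]·|γ_{α,β}|_ω, where each use of (σ,η) in a path is counted with multiplicity. -/

import Mathlib

/-!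
For a transition `(α, β)` of `L'` the increment `f α - f β` telescopes along `γ_{α,β}`, so weighted
Cauchy–Schwarz gives `(f α - f β)² ≤ |γ_{α,β}|_ω · ∑ (f σ - f η)² / ω(σ,η)`, the sum running over
the steps `(σ, η)` of `γ_{α,β}`. Summing against the rates of `L'` and exchanging the sums bounds
`𝓔_{L'}` by the maximal congestion times `𝓔_L`; hence `Gap(L') ≤ M · Gap(L)`.

Inverting the gaps requires `Gap(L') > 0`. This is the same comparison again: the variance is the
Dirichlet form of the chain that jumps to `y` at rate `π y`, whose transitions can be routed along
`L'`-paths because `L'` is ergodic.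
-/

open Finset
open scoped Classical

section Markov

variable {Ω : Type*} [Fintype Ω]

/-- A generator matrix: nonnegative off-diagonal entries, zero row sums. -/
def IsGenerator (L : Ω → Ω → ℝ) : Prop :=
  (∀ x y : Ω, x ≠ y → 0 ≤ L x y) ∧ (∀ x : Ω, ∑ y : Ω, L x y = 0)

/-- A transition of a generator matrix. -/
def IsTransition (L : Ω → Ω → ℝ) (x y : Ω) : Prop := x ≠ y ∧ 0 < L x y

/-- Ergodicity: the directed graph of transitions is strongly connected. -/
def IsErgodicGen (L : Ω → Ω → ℝ) : Prop :=
  ∀ x y : Ω, Relation.ReflTransGen (IsTransition L) x y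

/-- Reversibility with respect to a distribution π. -/
def IsReversible (L : Ω → Ω → ℝ) (π : Ω → ℝ) : Prop :=
  ∀ x y : Ω, π x * L x y = π y * L y x

/-- The variance form. -/
noncomputable def VarForm (π : Ω → ℝ) (f : Ω → ℝ) : ℝ :=
  (1 / 2) * ∑ a : Ω, ∑ b : Ω, π a * π b * (f a - f b) ^ 2

/-- The Dirichlet form. -/
noncomputable def DirForm (π : Ω → ℝ) (L : Ω → Ω → ℝ) (f : Ω → ℝ) : ℝ :=
  (1 / 2) * ∑ a : Ω, ∑ b : Ω, π a * L a b * (f a - f b) ^ 2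

/-- The spectral gap: infimum (= minimum) of the Rayleigh quotient over nonconstant functions. -/
noncomputable def specGap (π : Ω → ℝ) (L : Ω → Ω → ℝ) : ℝ :=
  sInf {r : ℝ | ∃ f : Ω → ℝ, (∃ a b : Ω, f a ≠ f b) ∧ r = DirForm π L f / VarForm π f}

/-- The relaxation time, with the convention that it equals 1 on a one-point space. -/
noncomputable def relaxTime (π : Ω → ℝ) (L : Ω → Ω → ℝ) : ℝ :=
  if ∃ a b : Ω, a ≠ b then 1 / specGap π L else 1

/-- The uniform distribution on a finite type. -/
noncomputable def unif (Ω : Type*) [Fintype Ω] : Ω → ℝ := fun _ => 1 / (Fintype.card Ω : ℝ)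

end Markov

section Paths

variable {Ω : Type*} [Fintype Ω] [DecidableEq Ω]

/-- `γ` is an `L`-path from `a` to `b`: a sequence of at least two states, starting at `a`,
ending at `b`, each consecutive pair being a transition of `L`. -/
def IsLPath (L : Ω → Ω → ℝ) (a b : Ω) (γ : List Ω) : Prop :=
  2 ≤ γ.length ∧ γ.head? = some a ∧ γ.getLast? = some b ∧ γ.Chain' (IsTransition L)

/-- The `ω`-weight of a path: the sum of the weights of its steps. -/
noncomputable def pathWeight (ω : Ω → Ω → ℝ) (γ : List Ω) : ℝ :=
  ((γ.zip γ.tail).map fun p => ω p.1 p.2).sum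

/-- The length `|γ|` of a path (number of steps). -/
def pathLen (γ : List Ω) : ℕ := γ.length - 1

/-- The number of times the path `γ` uses the transition `(σ,η)`, with multiplicity. -/
def pathUses (γ : List Ω) (σ η : Ω) : ℕ := (γ.zip γ.tail).count (σ, η)

end Paths

theorem unif_pos {Ω : Type*} [Fintype Ω] [Nonempty Ω] (x : Ω) : 0 < unif Ω x :=
  one_div_pos.2 (Nat.cast_pos.2 Fintype.card_pos)

theorem rate_mul_sq_sub_eq_zero {Ω : Type*} {L : Ω → Ω → ℝ} (hL : ∀ x y, x ≠ y → 0 ≤ L x y)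
    {x y : Ω} (h : ¬ IsTransition L x y) (f : Ω → ℝ) : L x y * (f x - f y) ^ 2 = 0 := by
  rcases eq_or_ne x y with rfl | hne
  · rw [sub_self, zero_pow two_ne_zero, mul_zero]
  · rw [(not_lt.1 fun hpos => h ⟨hne, hpos⟩).antisymm (hL x y hne), zero_mul]

section Forms

variable {Ω : Type*} [Fintype Ω] {π : Ω → ℝ} {L L' : Ω → Ω → ℝ} {M : ℝ}

theorem varForm_eq_dirForm (π f : Ω → ℝ) : VarForm π f = DirForm π (fun _ => π) f :=
  rfl

theorem dirForm_nonneg (hπ : ∀ x, 0 ≤ π x) (hL : ∀ x y, x ≠ y → 0 ≤ L x y) (f : Ω → ℝ) :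
    0 ≤ DirForm π L f := by
  refine mul_nonneg (by norm_num) (sum_nonneg fun x _ => sum_nonneg fun y _ => ?_)
  rcases eq_or_ne x y with rfl | hne
  · simp
  · exact mul_nonneg (mul_nonneg (hπ x) (hL x y hne)) (sq_nonneg _)

theorem varForm_pos (hπ : ∀ x, 0 < π x) {f : Ω → ℝ} {a b : Ω} (hab : f a ≠ f b) :
    0 < VarForm π f := by
  have hterm (x y : Ω) : 0 ≤ π x * π y * (f x - f y) ^ 2 :=
    mul_nonneg (mul_pos (hπ x) (hπ y)).le (sq_nonneg _)
  have hab' : 0 < π a * π b * (f a - f b) ^ 2 :=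
    mul_pos (mul_pos (hπ a) (hπ b)) (sq_pos_of_ne_zero (sub_ne_zero.2 hab))
  refine mul_pos (by norm_num) (sum_pos' (fun x _ => sum_nonneg fun y _ => hterm x y) ?_)
  exact ⟨a, mem_univ a, sum_pos' (fun y _ => hterm a y) ⟨b, mem_univ b, hab'⟩⟩

theorem exists_nonconstant (Ω : Type*) [Nontrivial Ω] : ∃ f : Ω → ℝ, ∃ a b, f a ≠ f b := by
  obtain ⟨a, b, hab⟩ := exists_pair_ne Ω
  exact ⟨Pi.single a 1, a, b, by simp [hab.symm]⟩

theorem specGap_mul_varForm_le (hπ : ∀ x, 0 < π x) (hL : ∀ x y, x ≠ y → 0 ≤ L x y)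
    {f : Ω → ℝ} {a b : Ω} (hab : f a ≠ f b) :
    specGap π L * VarForm π f ≤ DirForm π L f := by
  rw [← le_div_iff₀ (varForm_pos hπ hab)]
  refine csInf_le ⟨0, ?_⟩ ⟨f, ⟨a, b, hab⟩, rfl⟩
  rintro _ ⟨g, ⟨x, y, hxy⟩, rfl⟩
  exact div_nonneg (dirForm_nonneg (fun x => (hπ x).le) hL g) (varForm_pos hπ hxy).le

theorem le_specGap [Nontrivial Ω] (hπ : ∀ x, 0 < π x) {c : ℝ}
    (h : ∀ f a b, f a ≠ f b → c * VarForm π f ≤ DirForm π L f) : c ≤ specGap π L := by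
  obtain ⟨f, hf⟩ := exists_nonconstant Ω
  refine le_csInf ⟨_, f, hf, rfl⟩ ?_
  rintro _ ⟨g, ⟨a, b, hab⟩, rfl⟩
  exact (le_div_iff₀ (varForm_pos hπ hab)).2 (h g a b hab)

theorem relaxTime_eq_inv [Nontrivial Ω] (π : Ω → ℝ) (L : Ω → Ω → ℝ) :
    relaxTime π L = (specGap π L)⁻¹ := by
  rw [relaxTime, if_pos (exists_pair_ne Ω), one_div]

theorem relaxTime_le_of_dirForm_le [Nontrivial Ω] (hπ : ∀ x, 0 < π x)
    (hL : ∀ x y, x ≠ y → 0 ≤ L x y) (hL' : ∀ x y, x ≠ y → 0 ≤ L' x y)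
    (hgap : 0 < specGap π L') (h : ∀ f, DirForm π L' f ≤ M * DirForm π L f) :
    relaxTime π L ≤ relaxTime π L' * M := by
  have hcomp {f : Ω → ℝ} {a b : Ω} (hab : f a ≠ f b) :
      specGap π L' * VarForm π f ≤ M * DirForm π L f :=
    (specGap_mul_varForm_le hπ hL' hab).trans (h f)
  have hM : 0 < M := by
    obtain ⟨f, a, b, hab⟩ := exists_nonconstant Ω
    exact pos_of_mul_pos_left ((mul_pos hgap (varForm_pos hπ hab)).trans_le (hcomp hab))
      (dirForm_nonneg (fun x => (hπ x).le) hL f)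
  have hle : specGap π L' / M ≤ specGap π L := le_specGap hπ fun f a b hab => by
    rw [div_mul_eq_mul_div, div_le_iff₀' hM]
    exact hcomp hab
  calc relaxTime π L = (specGap π L)⁻¹ := relaxTime_eq_inv π L
    _ ≤ (specGap π L' / M)⁻¹ := inv_anti₀ (div_pos hgap hM) hle
    _ = relaxTime π L' * M := by rw [relaxTime_eq_inv, inv_div, div_eq_inv_mul]

end Forms

section PathWeight

variable {Ω : Type*}

theorem pathWeight_sub {f : Ω → ℝ} {a b : Ω} {γ : List Ω} (ha : γ.head? = some a)
    (hb : γ.getLast? = some b) : pathWeight (fun x y => f x - f y) γ = f a - f b := by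
  induction γ generalizing a with
  | nil => simp at ha
  | cons x γ ih =>
    obtain rfl : x = a := by simpa using ha
    cases γ with
    | nil =>
      obtain rfl : x = b := by simpa using hb
      simp [pathWeight]
    | cons y γ =>
      have htail := ih (a := y) rfl (by rwa [List.getLast?_cons_cons] at hb)
      simp only [pathWeight, List.tail_cons, List.zip_cons_cons, List.map_cons,
        List.sum_cons] at htail ⊢
      rw [htail, sub_add_sub_cancel]

theorem rel_of_mem_zip_tail {R : Ω → Ω → Prop} {γ : List Ω} (hγ : γ.IsChain R) {x y : Ω}
    (hxy : (x, y) ∈ γ.zip γ.tail) : R x y := by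
  obtain ⟨i, hi, hget⟩ := List.getElem_of_mem hxy
  grind [List.isChain_iff_getElem]

theorem pathUses_eq_zero [DecidableEq Ω] {R : Ω → Ω → Prop} {γ : List Ω} (hγ : γ.IsChain R)
    {x y : Ω} (hxy : ¬ R x y) : pathUses γ x y = 0 :=
  List.count_eq_zero.2 fun hmem => hxy (rel_of_mem_zip_tail hγ hmem)

theorem pathWeight_eq_sum_pathUses [Fintype Ω] [DecidableEq Ω] (ω : Ω → Ω → ℝ) (γ : List Ω) :
    pathWeight ω γ = ∑ p : Ω × Ω, (pathUses γ p.1 p.2 : ℝ) * ω p.1 p.2 := by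
  have hunused (p : Ω × Ω) (hp : p ∉ (γ.zip γ.tail).toFinset) : pathUses γ p.1 p.2 = 0 :=
    List.count_eq_zero.2 (by rwa [List.mem_toFinset] at hp)
  calc pathWeight ω γ = ∑ p ∈ (γ.zip γ.tail).toFinset, (pathUses γ p.1 p.2 : ℝ) * ω p.1 p.2 := by
        simp only [pathWeight, sum_list_map_count, nsmul_eq_mul, pathUses]
        -- The two sides count with different `BEq` instances on `Ω × Ω`.
        congr!
    _ = ∑ p : Ω × Ω, (pathUses γ p.1 p.2 : ℝ) * ω p.1 p.2 :=
        sum_subset (subset_univ _) fun p _ hp => by rw [hunused p hp, Nat.cast_zero, zero_mul]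

theorem sq_pathWeight_le {R : Ω → Ω → Prop} {γ : List Ω} (hγ : γ.IsChain R)
    {ω : Ω → Ω → ℝ} (hω : ∀ x y, R x y → 0 < ω x y) (g : Ω → Ω → ℝ) :
    pathWeight g γ ^ 2 ≤ pathWeight ω γ * pathWeight (fun x y => g x y ^ 2 / ω x y) γ := by
  have hω_pos {p : Ω × Ω} (hp : p ∈ (γ.zip γ.tail).toFinset) : 0 < ω p.1 p.2 :=
    hω _ _ (rel_of_mem_zip_tail hγ (List.mem_toFinset.1 hp))
  simp only [pathWeight, sum_list_map_count, nsmul_eq_mul]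
  refine sum_sq_le_sum_mul_sum_of_sq_le_mul _ (fun p hp => ?_) (fun p hp => ?_) fun p hp => ?_
  · exact mul_nonneg (Nat.cast_nonneg _) (hω_pos hp).le
  · exact mul_nonneg (Nat.cast_nonneg _) (div_nonneg (sq_nonneg _) (hω_pos hp).le)
  · have := hω_pos hp
    exact le_of_eq (by field_simp)

theorem sq_sub_le_pathWeight_mul {L ω : Ω → Ω → ℝ} {a b : Ω} {γ : List Ω}
    (hγ : IsLPath L a b γ) (hω : ∀ x y, IsTransition L x y → 0 < ω x y) (f : Ω → ℝ) :
    (f a - f b) ^ 2 ≤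
      pathWeight ω γ * pathWeight (fun x y => (f x - f y) ^ 2 / ω x y) γ := by
  obtain ⟨-, hhead, hlast, hchain⟩ := hγ
  rw [← pathWeight_sub hhead hlast]
  exact sq_pathWeight_le hchain hω _

theorem exists_isLPath {L : Ω → Ω → ℝ} {a b : Ω} (hab : a ≠ b)
    (h : Relation.ReflTransGen (IsTransition L) a b) : ∃ γ, IsLPath L a b γ := by
  obtain ⟨l, hchain, hlast⟩ := List.exists_isChain_cons_of_relationReflTransGen h
  have hlast? : (a :: l).getLast? = some b := by
    rw [List.getLast?_eq_some_getLast (List.cons_ne_nil a l), hlast]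
  cases l with
  | nil => exact absurd hlast hab
  | cons c l => exact ⟨a :: c :: l, by simp, rfl, hlast?, hchain⟩

end PathWeight

section Congestion

variable {Ω : Type*} [Fintype Ω] [DecidableEq Ω] {π : Ω → ℝ} {L L' ω : Ω → Ω → ℝ}
  {γ : Ω → Ω → List Ω} {M : ℝ}

/-- The load that the canonical paths `γ` put on `(σ, η)`: every use of `(σ, η)` by a path
`γ α β` counts with the flow `π α * L' α β` times the `ω`-weight of the path. -/
noncomputable def pathLoad (π : Ω → ℝ) (L' ω : Ω → Ω → ℝ) (γ : Ω → Ω → List Ω) (σ η : Ω) : ℝ :=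
  ∑ α : Ω, ∑ β : Ω,
    if IsTransition L' α β then
      π α * ((pathUses (γ α β) σ η : ℝ) * L' α β * pathWeight ω (γ α β))
    else 0

/-- The congestion of a transition `(σ, η)` of `L`: its load relative to its `ω`-weighted flow
`π σ * L σ η * ω σ η`. The comparison constant is any bound for it over the transitions of `L`. -/
noncomputable def congestion (π : Ω → ℝ) (L L' ω : Ω → Ω → ℝ) (γ : Ω → Ω → List Ω)
    (σ η : Ω) : ℝ :=
  1 / (π σ * L σ η * ω σ η) * pathLoad π L' ω γ σ η

theorem congestion_unif [Nonempty Ω] (L L' ω : Ω → Ω → ℝ) (γ : Ω → Ω → List Ω) (σ η : Ω) :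
    congestion (unif Ω) L L' ω γ σ η =
      1 / (L σ η * ω σ η) *
        ∑ α : Ω, ∑ β : Ω,
          if IsTransition L' α β then
            (pathUses (γ α β) σ η : ℝ) * L' α β * pathWeight ω (γ α β)
          else 0 := by
  have hu : unif Ω σ ≠ 0 := (unif_pos σ).ne'
  have hload : pathLoad (unif Ω) L' ω γ σ η = unif Ω σ * ∑ α : Ω, ∑ β : Ω,
      if IsTransition L' α β then
        (pathUses (γ α β) σ η : ℝ) * L' α β * pathWeight ω (γ α β)
      else 0 := by
    simp only [pathLoad, mul_sum, mul_ite, mul_zero]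
    rfl
  rw [congestion, hload]
  field_simp

theorem pathLoad_eq_zero (hγ : ∀ α β, IsTransition L' α β → IsLPath L α β (γ α β)) {σ η : Ω}
    (h : ¬ IsTransition L σ η) : pathLoad π L' ω γ σ η = 0 := by
  refine sum_eq_zero fun α _ => sum_eq_zero fun β _ => ?_
  split_ifs with hαβ
  · simp [pathUses_eq_zero (hγ α β hαβ).2.2.2 h]
  · rfl

theorem sum_pathLoad_mul (π : Ω → ℝ) (L' ω g : Ω → Ω → ℝ) (γ : Ω → Ω → List Ω) :
    ∑ σ, ∑ η, pathLoad π L' ω γ σ η * g σ η =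
      ∑ α, ∑ β, if IsTransition L' α β then
        π α * L' α β * (pathWeight ω (γ α β) * pathWeight g (γ α β)) else 0 := by
  simp only [pathLoad, ← Fintype.sum_prod_type', pathWeight_eq_sum_pathUses g]
  simp only [sum_mul]
  rw [sum_comm]
  refine sum_congr rfl fun p _ => ?_
  split_ifs with hp
  · simp only [mul_sum]
    exact sum_congr rfl fun q _ => by ring
  · simp only [zero_mul, sum_const_zero]

theorem sum_mul_sq_sub_le_sum_pathLoad_mul (hπ : ∀ x, 0 ≤ π x)
    (hL' : ∀ x y, x ≠ y → 0 ≤ L' x y) (hω : ∀ x y, IsTransition L x y → 0 < ω x y)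
    (hγ : ∀ α β, IsTransition L' α β → IsLPath L α β (γ α β)) (f : Ω → ℝ) :
    ∑ α, ∑ β, π α * L' α β * (f α - f β) ^ 2 ≤
      ∑ σ, ∑ η, pathLoad π L' ω γ σ η * ((f σ - f η) ^ 2 / ω σ η) := by
  rw [sum_pathLoad_mul π L' ω (fun σ η => (f σ - f η) ^ 2 / ω σ η)]
  refine sum_le_sum fun α _ => sum_le_sum fun β _ => ?_
  split_ifs with h
  · exact mul_le_mul_of_nonneg_left (sq_sub_le_pathWeight_mul (hγ α β h) hω f)
      (mul_nonneg (hπ α) h.2.le)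
  · rw [mul_assoc, rate_mul_sq_sub_eq_zero hL' h, mul_zero]

theorem pathLoad_mul_le (hπ : ∀ x, 0 < π x) (hL : ∀ x y, x ≠ y → 0 ≤ L x y)
    (hω : ∀ x y, IsTransition L x y → 0 < ω x y)
    (hγ : ∀ α β, IsTransition L' α β → IsLPath L α β (γ α β))
    (hM : ∀ σ η, IsTransition L σ η → congestion π L L' ω γ σ η ≤ M) (f : Ω → ℝ) (σ η : Ω) :
    pathLoad π L' ω γ σ η * ((f σ - f η) ^ 2 / ω σ η) ≤
      M * (π σ * L σ η * (f σ - f η) ^ 2) := by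
  by_cases h : IsTransition L σ η
  · have hπσ := hπ σ
    have hLση := h.2
    have hωση := hω σ η h
    calc pathLoad π L' ω γ σ η * ((f σ - f η) ^ 2 / ω σ η)
        = congestion π L L' ω γ σ η * (π σ * L σ η * (f σ - f η) ^ 2) := by
          rw [congestion]
          field_simp
      _ ≤ M * (π σ * L σ η * (f σ - f η) ^ 2) :=
          mul_le_mul_of_nonneg_right (hM σ η h) (by positivity)
  · rw [pathLoad_eq_zero hγ h, mul_assoc, rate_mul_sq_sub_eq_zero hL h, zero_mul, mul_zero,
      mul_zero]

theorem dirForm_le_of_congestion_le (hπ : ∀ x, 0 < π x) (hL : ∀ x y, x ≠ y → 0 ≤ L x y)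
    (hL' : ∀ x y, x ≠ y → 0 ≤ L' x y) (hω : ∀ x y, IsTransition L x y → 0 < ω x y)
    (hγ : ∀ α β, IsTransition L' α β → IsLPath L α β (γ α β))
    (hM : ∀ σ η, IsTransition L σ η → congestion π L L' ω γ σ η ≤ M) (f : Ω → ℝ) :
    DirForm π L' f ≤ M * DirForm π L f := by
  calc DirForm π L' f
      ≤ 1 / 2 * ∑ σ, ∑ η, pathLoad π L' ω γ σ η * ((f σ - f η) ^ 2 / ω σ η) :=
        mul_le_mul_of_nonneg_left
          (sum_mul_sq_sub_le_sum_pathLoad_mul (fun x => (hπ x).le) hL' hω hγ f) (by norm_num)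
    _ ≤ 1 / 2 * ∑ σ, ∑ η, M * (π σ * L σ η * (f σ - f η) ^ 2) :=
        mul_le_mul_of_nonneg_left (sum_le_sum fun σ _ => sum_le_sum fun η _ =>
          pathLoad_mul_le hπ hL hω hγ hM f σ η) (by norm_num)
    _ = M * DirForm π L f := by
        simp only [← mul_sum, DirForm]
        ring

end Congestion

section Comparison

variable {Ω : Type*} [Fintype Ω] {π : Ω → ℝ} {L L' ω : Ω → Ω → ℝ}

theorem exists_varForm_le_mul_dirForm (hπ : ∀ x, 0 < π x) (hL : ∀ x y, x ≠ y → 0 ≤ L x y)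
    (herg : IsErgodicGen L) : ∃ C > 0, ∀ f, VarForm π f ≤ C * DirForm π L f := by
  have hpath (α β : Ω) : ∃ γ, α ≠ β → IsLPath L α β γ := by
    by_cases h : α = β
    · exact ⟨[], fun hne => absurd h hne⟩
    · exact (exists_isLPath h (herg α β)).imp fun _ hγ _ => hγ
  choose γ hγ using hpath
  obtain ⟨C, hC⟩ := Set.finite_range
    (fun p : Ω × Ω => congestion π L (fun _ => π) (fun _ _ => 1) γ p.1 p.2) |>.bddAbove
  refine ⟨max C 1, lt_max_of_lt_right one_pos, fun f => ?_⟩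
  rw [varForm_eq_dirForm]
  exact dirForm_le_of_congestion_le hπ hL (fun _ y _ => (hπ y).le) (fun _ _ _ => one_pos)
    (fun α β h => hγ α β h.1)
    (fun σ η _ => le_max_of_le_left (hC (Set.mem_range_self (σ, η)))) f

theorem specGap_pos [Nontrivial Ω] (hπ : ∀ x, 0 < π x) (hL : ∀ x y, x ≠ y → 0 ≤ L x y)
    (herg : IsErgodicGen L) : 0 < specGap π L := by
  obtain ⟨C, hC, hpoincare⟩ := exists_varForm_le_mul_dirForm hπ hL herg
  exact (inv_pos.2 hC).trans_le
    (le_specGap hπ fun f _ _ _ => (inv_mul_le_iff₀ hC).2 (hpoincare f))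

theorem weighted_canonical_paths_general [Nontrivial Ω] [DecidableEq Ω] (hπ : ∀ x, 0 < π x)
    (hgen : IsGenerator L) (hgen' : IsGenerator L') (herg' : IsErgodicGen L')
    (hω : ∀ x y, IsTransition L x y → 0 < ω x y)
    {γ : Ω → Ω → List Ω} (hγ : ∀ α β, IsTransition L' α β → IsLPath L α β (γ α β)) {M : ℝ}
    (hM : ∀ σ η, IsTransition L σ η → congestion π L L' ω γ σ η ≤ M) :
    relaxTime π L ≤ relaxTime π L' * M :=
  relaxTime_le_of_dirForm_le hπ hgen.1 hgen'.1 (specGap_pos hπ hgen'.1 herg')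
    (dirForm_le_of_congestion_le hπ hgen.1 hgen'.1 hω hγ hM)

end Comparison

/-- weighted canonical paths method: for ergodic symmetric generators `L`, `L'`
on the same state space (hence both with uniform stationary distribution), a positive weight
function `ω` on the transitions of `L`, and a choice of a single canonical `L`-path
`γ_{α,β}` for each transition `(α,β)` of `L'`,
`τ(𝓛) ≤ τ(𝓛') · max_{(σ,η)} (1/(𝓛[σ→η]·ω(σ,η))) Σ_{(α,β) : γ_{α,β} ∋ (σ,η)} 𝓛'[α→β]·|γ_{α,β}|_ω`,
uses counted with multiplicity. -/
theorem weighted_canonical_paths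
    {Ω : Type} [Fintype Ω] [DecidableEq Ω] (hcard : 2 ≤ Fintype.card Ω)
    (L L' : Ω → Ω → ℝ)
    (hgen : IsGenerator L) (hgen' : IsGenerator L')
    (hsym : ∀ x y : Ω, L x y = L y x) (hsym' : ∀ x y : Ω, L' x y = L' y x)
    (herg : IsErgodicGen L) (herg' : IsErgodicGen L')
    (ω : Ω → Ω → ℝ) (hω : ∀ x y, IsTransition L x y → 0 < ω x y)
    (γpath : Ω → Ω → List Ω)
    (hγ : ∀ α β, IsTransition L' α β → IsLPath L α β (γpath α β))
    (M : ℝ)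
    (hM : IsGreatest
      {r : ℝ | ∃ σ η : Ω, IsTransition L σ η ∧
        r = (1 / (L σ η * ω σ η)) *
          ∑ α : Ω, ∑ β : Ω,
            if IsTransition L' α β then
              (pathUses (γpath α β) σ η : ℝ) * L' α β * pathWeight ω (γpath α β)
            else 0} M) :
    relaxTime (unif Ω) L ≤ relaxTime (unif Ω) L' * M := by
  have : Nontrivial Ω := Fintype.one_lt_card_iff_nontrivial.1 hcard
  exact weighted_canonical_paths_general unif_pos hgen hgen' herg' hω hγ fun σ η h =>
    (congestion_unif L L' ω γpath σ η).trans_le (hM.2 ⟨σ, η, h, rfl⟩)
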